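/- arXiv:2511.21217 — 3 statements merged into one kernel-verified Lean document; each statement's English description precedes it below -/
import Mathlib

section
/- Let S be a finite set with n ≥ 1 elements and let F be a nonempty family of subsets of S. Call a weight function w : S → {1, 2, …, 2n} isolating if there is a unique set A ∈ F minimizing the weight w(A) = Σ_{x∈A} w(x) over all members of F. Then at least half of all (2n)^n weight functions w : S → {1, …, 2n} are isolating; equivalently, if the weights w(x) are chosen uniformly and independently from {1, …, 2n}, then with probability at least 1/2 there is a unique minimum-weight set in F. -/
open scoped Classical

/-- `A` is a minimum-weight member of the family `F` for the weight function `w`. -/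
def IsMinWeight {α : Type*} (F : Finset (Finset α)) (w : α → ℕ) (A : Finset α) : Prop :=
  A ∈ F ∧ ∀ B ∈ F, ∑ x ∈ A, w x ≤ ∑ x ∈ B, w x

/-- Some minimum-weight member of `F` contains `x` and some other one does not. -/
def IsAmbiguousAt {α : Type*} (F : Finset (Finset α)) (w : α → ℕ) (x : α) : Prop :=
  ∃ A B, IsMinWeight F w A ∧ IsMinWeight F w B ∧ x ∈ A ∧ x ∉ B

theorem exists_isMinWeight {α : Type*} {F : Finset (Finset α)} (hF : F.Nonempty) (w : α → ℕ) :
    ∃ A, IsMinWeight F w A :=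
  F.exists_min_image (fun A => ∑ x ∈ A, w x) hF

theorem exists_isAmbiguousAt_of_not_existsUnique {α : Type*} {F : Finset (Finset α)}
    (hF : F.Nonempty) {w : α → ℕ} (h : ¬ ∃! A, IsMinWeight F w A) :
    ∃ x, IsAmbiguousAt F w x := by
  obtain ⟨A, hA⟩ := exists_isMinWeight hF w
  by_contra hamb
  refine h ⟨A, hA, fun B hB => Finset.ext fun x => ⟨fun hxB => ?_, fun hxA => ?_⟩⟩
  · by_contra hxA
    exact hamb ⟨x, B, A, hB, hA, hxB, hxA⟩
  · by_contra hxB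
    exact hamb ⟨x, A, B, hA, hB, hxA, hxB⟩

/-- The weight of an ambiguous element is a threshold determined by the other weights. -/
theorem IsAmbiguousAt.weight_le {α : Type*} {F : Finset (Finset α)} {w v : α → ℕ} {x : α}
    (hw : IsAmbiguousAt F w x) (hv : IsAmbiguousAt F v x) (h : ∀ y, y ≠ x → w y = v y) :
    v x ≤ w x := by
  obtain ⟨-, B, -, hB, -, hxB⟩ := hw
  obtain ⟨C, -, hC, -, hxC, -⟩ := hv
  have hBeq : ∑ y ∈ B, w y = ∑ y ∈ B, v y :=
    Finset.sum_congr rfl fun y hy => h y (ne_of_mem_of_not_mem hy hxB)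
  have hCeq : ∑ y ∈ C.erase x, w y = ∑ y ∈ C.erase x, v y :=
    Finset.sum_congr rfl fun y hy => h y (Finset.ne_of_mem_erase hy)
  have hCw := Finset.add_sum_erase C w hxC
  have hCv := Finset.add_sum_erase C v hxC
  have hBC := hB.2 C hC.1
  have hCB := hC.2 B hB.1
  omega

theorem IsAmbiguousAt.weight_eq {α : Type*} {F : Finset (Finset α)} {w v : α → ℕ} {x : α}
    (hw : IsAmbiguousAt F w x) (hv : IsAmbiguousAt F v x) (h : ∀ y, y ≠ x → w y = v y) :
    w x = v x :=
  le_antisymm (hv.weight_le hw fun y hy => (h y hy).symm) (hw.weight_le hv h)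

/-- At most a fraction `1 / m` of the weight functions with `m` values is ambiguous at `x`. -/
theorem card_isAmbiguousAt_mul_le {α : Type*} [Fintype α] (F : Finset (Finset α)) (m : ℕ)
    (x : α) :
    (Finset.univ.filter fun w : α → Fin m =>
      IsAmbiguousAt F (fun y => (w y : ℕ) + 1) x).card * m ≤ m ^ Fintype.card α := by
  set T := Finset.univ.filter fun w : α → Fin m => IsAmbiguousAt F (fun y => (w y : ℕ) + 1) x
  have hinj : Set.InjOn (fun p : (α → Fin m) × Fin m => Function.update p.1 x p.2)
      (T ×ˢ (Finset.univ : Finset (Fin m)) : Finset _) := by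
    rintro ⟨w, i⟩ hw ⟨v, j⟩ hv heq
    have hw' : IsAmbiguousAt F (fun y => (w y : ℕ) + 1) x := by simpa [T] using hw
    have hv' : IsAmbiguousAt F (fun y => (v y : ℕ) + 1) x := by simpa [T] using hv
    have hoff : ∀ y, y ≠ x → w y = v y := fun y hy => by
      simpa [hy] using congrFun heq y
    have hij : i = j := by simpa using congrFun heq x
    have hx : w x = v x := by
      have := hw'.weight_eq hv' fun y hy => by rw [hoff y hy]
      exact Fin.ext (by simpa using this)
    have hwv : w = v := funext fun y => by
      by_cases hy : y = x
      · rw [hy, hx]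
      · exact hoff y hy
    rw [hwv, hij]
  simpa using Finset.card_le_card_of_injOn _ (fun _ _ => Finset.mem_univ _) hinj

/-- The Isolating Lemma of Mulmuley, Vazirani and Vazirani.
`S` is modeled as a fintype `α` with `n` elements; a weight function with values in
`{1, …, 2n}` is modeled as `w : α → Fin (2 * n)`, the value of `w` at `x` being
`(w x : ℕ) + 1`.  A weight function is isolating if there is a unique member of the
family `F` of minimum weight.  At least half of all `(2*n)^n` weight functions are
isolating. -/
theorem stmt0 {α : Type*} [Fintype α] (n : ℕ) (hn : 1 ≤ n)
    (hcard : Fintype.card α = n) (F : Finset (Finset α)) (hF : F.Nonempty) :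
    (2 * n) ^ n ≤
      2 * (Finset.univ.filter (fun w : α → Fin (2 * n) =>
        ∃! A, A ∈ F ∧ ∀ B ∈ F, (∑ x ∈ A, ((w x : ℕ) + 1)) ≤ ∑ x ∈ B, ((w x : ℕ) + 1))).card := by
  change (2 * n) ^ n ≤ 2 * (Finset.univ.filter fun w : α → Fin (2 * n) =>
    ∃! A, IsMinWeight F (fun x => (w x : ℕ) + 1) A).card
  set good := Finset.univ.filter fun w : α → Fin (2 * n) =>
    ∃! A, IsMinWeight F (fun x => (w x : ℕ) + 1) A
  let ambiguous (x : α) := Finset.univ.filter fun w : α → Fin (2 * n) =>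
    IsAmbiguousAt F (fun y => (w y : ℕ) + 1) x
  have htotal : good.card + goodᶜ.card = (2 * n) ^ n := by
    rw [Finset.card_add_card_compl]
    simp [hcard]
  have hcover : goodᶜ ⊆ Finset.univ.biUnion ambiguous := fun w hw => by
    have hw' : ¬ ∃! A, IsMinWeight F (fun x => (w x : ℕ) + 1) A := by
      simpa only [good, Finset.mem_compl, Finset.mem_filter, Finset.mem_univ, true_and] using hw
    simpa [ambiguous] using exists_isAmbiguousAt_of_not_existsUnique hF hw'
  have hambiguous (x : α) : (ambiguous x).card * (2 * n) ≤ (2 * n) ^ n :=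
    (card_isAmbiguousAt_mul_le F (2 * n) x).trans_eq (by rw [hcard])
  have hbad : n * (2 * goodᶜ.card) ≤ n * (2 * n) ^ n := by
    calc n * (2 * goodᶜ.card) = goodᶜ.card * (2 * n) := by ring
      _ ≤ (∑ x, (ambiguous x).card) * (2 * n) :=
        Nat.mul_le_mul_right _ ((Finset.card_le_card hcover).trans Finset.card_biUnion_le)
      _ = ∑ x, (ambiguous x).card * (2 * n) := Finset.sum_mul _ _ _
      _ ≤ ∑ _x : α, (2 * n) ^ n :=
        Finset.sum_le_sum fun x _ => hambiguous x
      _ = n * (2 * n) ^ n := by simp [hcard]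
  have := Nat.le_of_mul_le_mul_left hbad hn
  omega
end

section
/- Let S be a finite set, F a nonempty family of subsets of S, and x ∈ S such that some member of F contains x and some member of F does not contain x. Fix an assignment w0 of integer weights to the elements of S \ {x}, and for an integer v let w_v denote the weight function extending w0 with w_v(x) = v. Then there is at most one integer v for which min{ w_v(A) : A ∈ F, x ∈ A } = min{ w_v(B) : B ∈ F, x ∉ B }. (In words: for fixed weights on the other elements, at most one choice of weight for x makes x 'ambiguous' in the sense that both a minimum-weight set containing x and a minimum-weight set avoiding x exist.) -/
/-- The minimum weight over sets containing `x` is the weight of `x` plus a constant. -/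
theorem inf'_sum_update_of_mem {α : Type*} [DecidableEq α] {G : Finset (Finset α)}
    (hG : G.Nonempty) {x : α} (hx : ∀ A ∈ G, x ∈ A) (w : α → ℤ) (v : ℤ) :
    G.inf' hG (fun A => ∑ y ∈ A, Function.update w x v y) =
      v + G.inf' hG (fun A => ∑ y ∈ A \ {x}, w y) := by
  rw [Finset.inf'_congr hG rfl fun A hA => Finset.sum_update_of_mem (hx A hA) w v]
  exact (Finset.apply_inf'_eq_inf'_comp hG (v + ·) fun a b => (min_add_add_left v a b).symm).symm

/-- The minimum weight over sets avoiding `x` does not depend on the weight of `x`. -/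
theorem inf'_sum_update_of_notMem {α : Type*} [DecidableEq α] {G : Finset (Finset α)}
    (hG : G.Nonempty) {x : α} (hx : ∀ A ∈ G, x ∉ A) (w : α → ℤ) (v : ℤ) :
    G.inf' hG (fun A => ∑ y ∈ A, Function.update w x v y) =
      G.inf' hG (fun A => ∑ y ∈ A, w y) :=
  Finset.inf'_congr hG rfl fun A hA => Finset.sum_update_of_notMem (hx A hA) w v

/-- Key counting step of the Isolating Lemma: for fixed integer weights `w0` on the
elements other than `x`, there is at most one integer value `v` for the weight of `x`
(giving the weight function `Function.update w0 x v`) such that the minimum weight of a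
member of `F` containing `x` equals the minimum weight of a member of `F` avoiding `x`. -/
theorem stmt1 {α : Type*} [DecidableEq α] (F : Finset (Finset α)) (x : α)
    (h1 : (F.filter (fun A => x ∈ A)).Nonempty)
    (h2 : (F.filter (fun A => x ∉ A)).Nonempty)
    (w0 : α → ℤ) :
    ∀ v₁ v₂ : ℤ,
      ((F.filter (fun A => x ∈ A)).inf' h1
          (fun A => ∑ y ∈ A, Function.update w0 x v₁ y) =
        (F.filter (fun A => x ∉ A)).inf' h2
          (fun B => ∑ y ∈ B, Function.update w0 x v₁ y)) →
      ((F.filter (fun A => x ∈ A)).inf' h1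
          (fun A => ∑ y ∈ A, Function.update w0 x v₂ y) =
        (F.filter (fun A => x ∉ A)).inf' h2
          (fun B => ∑ y ∈ B, Function.update w0 x v₂ y)) →
      v₁ = v₂ := by
  intro v₁ v₂ e₁ e₂
  have hmem : ∀ A ∈ F.filter (fun A => x ∈ A), x ∈ A := fun A hA => (Finset.mem_filter.mp hA).2
  have hnot : ∀ A ∈ F.filter (fun A => x ∉ A), x ∉ A := fun A hA => (Finset.mem_filter.mp hA).2
  rw [inf'_sum_update_of_mem h1 hmem, inf'_sum_update_of_notMem h2 hnot] at e₁ e₂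
  exact add_right_cancel (e₁.trans e₂.symm)
end

section
/- Let S ⊆ ℕ be a finite set of k natural numbers, each less than 2^n with n ≥ 1, and let N be a natural number such that the number of primes less than or equal to N is strictly greater than n·k·(k−1)/2. Then there exists a prime p ≤ N such that the map x ↦ x mod p is injective on S, i.e., for all x ≠ y in S, x mod p ≠ y mod p. -/
/-- A positive natural number less than `2 ^ n` has at most `n` distinct prime divisors. -/
theorem Nat.card_primeFactors_le_of_lt_two_pow {d n : ℕ} (hd : d ≠ 0) (h : d < 2 ^ n) :
    d.primeFactors.card ≤ n := by
  have hpow : 2 ^ d.primeFactors.card ≤ d :=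
    calc 2 ^ d.primeFactors.card ≤ ∏ p ∈ d.primeFactors, p :=
          Finset.pow_card_le_prod _ _ _ fun p hp => (Nat.prime_of_mem_primeFactors hp).two_le
      _ ≤ d := Nat.le_of_dvd (Nat.pos_of_ne_zero hd) (Nat.prod_primeFactors_dvd d)
  exact ((Nat.pow_lt_pow_iff_right one_lt_two).1 (hpow.trans_lt h)).le

/-- At most `n` primes from a given finite set identify two distinct numbers less than `2 ^ n`. -/
theorem Nat.card_filter_prime_modEq_le {x y n : ℕ} (P : Finset ℕ) (hP : ∀ p ∈ P, p.Prime)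
    (hxy : x ≠ y) (hx : x < 2 ^ n) (hy : y < 2 ^ n) :
    (P.filter fun p => x ≡ y [MOD p]).card ≤ n := by
  wlog hlt : x < y generalizing x y
  · simpa only [Nat.ModEq.comm] using this hxy.symm hy hx (by omega)
  refine (Finset.card_le_card fun p hp => ?_).trans
    (Nat.card_primeFactors_le_of_lt_two_pow (d := y - x) (by omega) (by omega))
  rw [Finset.mem_filter] at hp
  exact Nat.mem_primeFactors.2
    ⟨hP p hp.1, (Nat.modEq_iff_dvd' hlt.le).1 hp.2, by omega⟩

/-- Quantitative Fredman–Komlós–Szemerédi hashing: if `S` is a set of `k` natural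
numbers, each less than `2^n` (`n ≥ 1`), and the number of primes `≤ N` exceeds
`n·k·(k−1)/2`, then some prime `p ≤ N` separates all elements of `S` modulo `p`. -/
theorem stmt2 (S : Finset ℕ) (n k : ℕ) (hn : 1 ≤ n) (hk : S.card = k)
    (hS : ∀ x ∈ S, x < 2 ^ n) (N : ℕ)
    (hN : n * (k * (k - 1)) / 2 < ((Finset.range (N + 1)).filter Nat.Prime).card) :
    ∃ p, Nat.Prime p ∧ p ≤ N ∧ ∀ x ∈ S, ∀ y ∈ S, x ≠ y → x % p ≠ y % p := by
  classical
  by_contra! hcon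
  set P := (Finset.range (N + 1)).filter Nat.Prime
  have hP : ∀ p ∈ P, p.Prime := fun p hp => (Finset.mem_filter.1 hp).2
  let bad : Finset ℕ → Finset ℕ := fun t =>
    P.filter fun p => ∃ x ∈ t, ∃ y ∈ t, x ≠ y ∧ x ≡ y [MOD p]
  have hcover : P ⊆ (S.powersetCard 2).biUnion bad := by
    intro p hp
    have hpN : p ≤ N := by
      have := Finset.mem_range.1 (Finset.mem_filter.1 hp).1
      omega
    obtain ⟨x, hx, y, hy, hxy, hmod⟩ := hcon p (hP p hp) hpN
    refine Finset.mem_biUnion.2 ⟨{x, y}, Finset.mem_powersetCard.2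
      ⟨by simp [Finset.insert_subset_iff, hx, hy], Finset.card_pair hxy⟩, ?_⟩
    exact Finset.mem_filter.2 ⟨hp, x, by simp, y, by simp, hxy, hmod⟩
  have hbad : ∀ t ∈ S.powersetCard 2, (bad t).card ≤ n := by
    intro t ht
    obtain ⟨htS, htc⟩ := Finset.mem_powersetCard.1 ht
    obtain ⟨x, y, hxy, rfl⟩ := Finset.card_eq_two.1 htc
    refine (Finset.card_le_card fun p hp => ?_).trans
      (Nat.card_filter_prime_modEq_le P hP hxy (hS x (htS (by simp))) (hS y (htS (by simp))))
    obtain ⟨hpP, a, ha, b, hb, hab, hmod⟩ := Finset.mem_filter.1 hp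
    refine Finset.mem_filter.2 ⟨hpP, ?_⟩
    simp only [Finset.mem_insert, Finset.mem_singleton] at ha hb
    rcases ha with rfl | rfl <;> rcases hb with rfl | rfl
    · exact absurd rfl hab
    · exact hmod
    · exact hmod.symm
    · exact absurd rfl hab
  have hle := (Finset.card_le_card hcover).trans (Finset.card_biUnion_le_card_mul _ _ n hbad)
  rw [Finset.card_powersetCard, hk, Nat.choose_two_right, mul_comm,
    ← Nat.mul_div_assoc n (Nat.even_mul_pred_self k).two_dvd] at hle
  omega
end
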